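/- arXiv:2410.10593 — 3 statements merged into one kernel-verified Lean document; each statement's English description precedes it below -/
import Mathlib

section
/- Fix a Young diagram λ with n cells and a natural number m. For a filling T of λ with entries in {1,…,m}, define the Young operator Y(T) in the polynomial ring ℂ[X_{(r,s)} : r ∈ ℕ, s ∈ {1,…,m}] as the product over the columns of T of the Slater operators of the entries of each column (the column of length k contributing S(T_{1,c},…,T_{k,c})). Then the family {Y(T) : T a semistandard Young tableau of shape λ with entries in {1,…,m}} is linearly independent over ℂ. -/
open scoped BigOperators

/-- The Slater operator `S(i₁,…,i_k)`: the determinant of the `k × k` matrix whose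
`(r,c)` entry is the commuting variable `X (r, i c)`. -/
noncomputable def slaterOp {k : ℕ} (i : Fin k → ℕ) : MvPolynomial (ℕ × ℕ) ℂ :=
  (Matrix.of fun r c : Fin k => MvPolynomial.X ((r : ℕ), i c)).det

/-- The Young operator `Y(T)` of a filling `T` of the Young diagram `μ`: the product over
the columns of `μ` of the Slater operators of the entries of each column. -/
noncomputable def youngOp (μ : YoungDiagram) (T : ℕ → ℕ → ℕ) : MvPolynomial (ℕ × ℕ) ℂ :=
  ∏ c ∈ Finset.range (μ.rowLen 0), slaterOp (fun r : Fin (μ.colLen c) => T (r : ℕ) c)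

/-- weight of an exponent vector -/
noncomputable def wt : ((ℕ × ℕ) →₀ ℕ) →+ ℕ := Finsupp.weight (fun x : ℕ × ℕ => x.1 * x.2)

/-- `d` is the unique exponent of `p` of top weight, with coefficient one -/
def Lead (p : MvPolynomial (ℕ × ℕ) ℂ) (d : (ℕ × ℕ) →₀ ℕ) : Prop :=
  ∃ q, p = MvPolynomial.monomial d 1 + q ∧ ∀ e, MvPolynomial.coeff e q ≠ 0 → wt e < wt d

theorem coeff_mul_wt (p q : MvPolynomial (ℕ × ℕ) ℂ) (e : (ℕ × ℕ) →₀ ℕ)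
    (h : MvPolynomial.coeff e (p * q) ≠ 0) :
    ∃ a b, a + b = e ∧ MvPolynomial.coeff a p ≠ 0 ∧ MvPolynomial.coeff b q ≠ 0 := by
  rw [MvPolynomial.coeff_mul] at h
  obtain ⟨x, hx, hne⟩ := Finset.exists_ne_zero_of_sum_ne_zero h
  exact ⟨x.1, x.2, by simpa using hx, left_ne_zero_of_mul hne, right_ne_zero_of_mul hne⟩

theorem coeff_mono_ne {a d : (ℕ × ℕ) →₀ ℕ}
    (h : MvPolynomial.coeff a (MvPolynomial.monomial d (1 : ℂ)) ≠ 0) : a = d := by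
  classical
  rw [MvPolynomial.coeff_monomial] at h
  by_contra hne
  exact h (if_neg (fun h' => hne h'.symm))

theorem Lead.mul {p q d e} (hp : Lead p d) (hq : Lead q e) : Lead (p * q) (d + e) := by
  obtain ⟨p', rfl, hp⟩ := hp
  obtain ⟨q', rfl, hq⟩ := hq
  refine ⟨MvPolynomial.monomial d 1 * q' + p' * MvPolynomial.monomial e 1 + p' * q', ?_, ?_⟩
  · have : (MvPolynomial.monomial (d + e) (1 : ℂ))
        = MvPolynomial.monomial d 1 * MvPolynomial.monomial e 1 := by
      rw [MvPolynomial.monomial_mul, one_mul]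
    rw [this]; ring
  · intro f hf
    rw [MvPolynomial.coeff_add, MvPolynomial.coeff_add] at hf
    have : MvPolynomial.coeff f (MvPolynomial.monomial d 1 * q') ≠ 0 ∨
        MvPolynomial.coeff f (p' * MvPolynomial.monomial e 1) ≠ 0 ∨
        MvPolynomial.coeff f (p' * q') ≠ 0 := by
      by_contra! hc
      exact hf (by rw [hc.1, hc.2.1, hc.2.2]; simp)
    rcases this with h | h | h <;> obtain ⟨a, b, rfl, ha, hb⟩ := coeff_mul_wt _ _ _ h
    · have := hq _ hb
      rw [coeff_mono_ne ha, map_add, map_add]; omega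
    · have := hp _ ha
      rw [coeff_mono_ne hb, map_add, map_add]; omega
    · have := hp _ ha
      have := hq _ hb
      rw [map_add, map_add]; omega

theorem Lead.one : Lead 1 0 := ⟨0, by simp, by simp⟩

theorem Lead.prod {ι : Type*} (s : Finset ι) (p : ι → MvPolynomial (ℕ × ℕ) ℂ)
    (d : ι → (ℕ × ℕ) →₀ ℕ) (h : ∀ i ∈ s, Lead (p i) (d i)) :
    Lead (∏ i ∈ s, p i) (∑ i ∈ s, d i) := by
  classical
  induction s using Finset.induction_on with
  | empty => simpa using Lead.one
  | insert a s ha ih =>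
    rw [Finset.prod_insert ha, Finset.sum_insert ha]
    exact (h a (by simp)).mul (ih fun i hi => h i (by simp [hi]))

theorem lead_slater {k : ℕ} (i : Fin k → ℕ) (hi : StrictMono i) :
    Lead (slaterOp i) (∑ r : Fin k, Finsupp.single ((r : ℕ), i r) 1) := by
  classical
  have hm : ∀ σ : Equiv.Perm (Fin k),
      (∏ c, (Matrix.of fun r c : Fin k =>
        (MvPolynomial.X ((r : ℕ), i c) : MvPolynomial (ℕ × ℕ) ℂ)) (σ c) c)
      = MvPolynomial.monomial (∑ c : Fin k, Finsupp.single (((σ c : Fin k) : ℕ), i c) 1) 1 := by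
    intro σ
    rw [MvPolynomial.monomial_sum_one]
    rfl
  refine ⟨∑ σ ∈ Finset.univ.erase (1 : Equiv.Perm (Fin k)), Equiv.Perm.sign σ •
    MvPolynomial.monomial (∑ c : Fin k, Finsupp.single (((σ c : Fin k) : ℕ), i c) 1) (1 : ℂ),
    ?_, ?_⟩
  · rw [slaterOp, Matrix.det_apply, ← Finset.add_sum_erase _ _ (Finset.mem_univ 1)]
    simp only [hm]
    simp
  · intro e he
    rw [MvPolynomial.coeff_sum] at he
    obtain ⟨σ, hσ, hne⟩ := Finset.exists_ne_zero_of_sum_ne_zero he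
    have h1 : σ ≠ 1 := (Finset.mem_erase.1 hσ).1
    have h2 : e = ∑ c : Fin k, Finsupp.single (((σ c : Fin k) : ℕ), i c) 1 := by
      apply coeff_mono_ne
      intro h0
      apply hne
      rcases Int.units_eq_one_or (Equiv.Perm.sign σ) with h | h <;> rw [h]
      · rw [one_smul, h0]
      · rw [Units.neg_smul, one_smul, MvPolynomial.coeff_neg, h0, neg_zero]
    rw [h2, map_sum, map_sum]
    simp only [wt, Finsupp.weight_single, one_smul]
    have hmv : Monovary (fun r : Fin k => (r : ℕ)) i := fun a b hab =>
      le_of_lt (hi.lt_iff_lt.1 hab)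
    rw [hmv.sum_comp_perm_mul_lt_sum_mul_iff]
    intro hmon
    apply h1
    have hs : Monotone σ := by
      intro a b hab
      rcases hab.eq_or_lt with rfl | hlt
      · exact le_rfl
      · exact hmon (hi hlt)
    have hss : StrictMono σ := hs.strictMono_of_injective σ.injective
    have := Subsingleton.elim (hss.orderIsoOfSurjective σ σ.surjective) (OrderIso.refl (Fin k))
    ext x
    have h3 := congrArg (fun f : Fin k ≃o Fin k => ((f x : Fin k) : ℕ)) this
    simpa using h3

/-- the leading exponent -/
noncomputable def dexp (μ : YoungDiagram) (T : ℕ → ℕ → ℕ) : (ℕ × ℕ) →₀ ℕ :=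
  ∑ c ∈ Finset.range (μ.rowLen 0), ∑ r : Fin (μ.colLen c), Finsupp.single ((r : ℕ), T r c) 1

theorem lead_young (μ : YoungDiagram) (T : SemistandardYoungTableau μ) :
    Lead (youngOp μ (fun i j => T i j)) (dexp μ (fun i j => T i j)) := by
  refine Lead.prod _ _ _ fun c _ => lead_slater _ ?_
  intro a b hab
  exact T.col_strict hab (YoungDiagram.mem_iff_lt_colLen.2 b.2)

theorem dexp_apply (μ : YoungDiagram) (T : ℕ → ℕ → ℕ) (r x : ℕ) :
    dexp μ T (r, x) = ((List.range (μ.rowLen r)).map (T r)).count x := by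
  classical
  have h1 : dexp μ T (r, x) = ∑ c ∈ Finset.range (μ.rowLen 0),
      if c < μ.rowLen r ∧ T r c = x then 1 else 0 := by
    rw [dexp, Finsupp.finsetSum_apply]
    refine Finset.sum_congr rfl fun c _ => ?_
    rw [Finsupp.finsetSum_apply,
      Fin.sum_univ_eq_sum_range (fun s => (Finsupp.single (s, T s c) 1 : (ℕ × ℕ) →₀ ℕ) (r, x))]
    have hiff : c < μ.rowLen r ↔ r < μ.colLen c := by
      rw [← YoungDiagram.mem_iff_lt_rowLen, YoungDiagram.mem_iff_lt_colLen]
    simp only [hiff]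
    simp only [Finsupp.single_apply, Prod.mk.injEq]
    have : ∀ s, (if s = r ∧ T s c = x then 1 else 0)
        = (if s = r then (if T r c = x then 1 else 0) else 0) := by
      intro s
      by_cases hs : s = r
      · subst hs; simp
      · simp [hs]
    simp only [this]
    rw [Finset.sum_ite_eq']
    simp only [Finset.mem_range, ite_and]
  have h2 : ∀ n, ((List.range n).map (T r)).count x
      = ∑ c ∈ Finset.range n, if T r c = x then 1 else 0 := by
    intro n
    induction n with
    | zero => simp
    | succ n ih =>
      rw [List.range_succ, List.map_append, List.count_append, ih, Finset.sum_range_succ]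
      simp [List.count_singleton]
  rw [h1, h2]
  have hsub : Finset.range (μ.rowLen r) ⊆ Finset.range (μ.rowLen 0) :=
    Finset.range_subset_range.2 (μ.rowLen_anti 0 r (Nat.zero_le _))
  rw [← Finset.sum_subset hsub]
  · refine Finset.sum_congr rfl fun c hc => ?_
    simp [Finset.mem_range.1 hc]
  · intro c _ hc
    rw [if_neg]
    intro h
    exact hc (Finset.mem_range.2 h.1)

theorem dexp_inj (μ : YoungDiagram) (T U : SemistandardYoungTableau μ)
    (h : dexp μ (fun i j => T i j) = dexp μ (fun i j => U i j)) : T = U := by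
  have hs : ∀ (V : SemistandardYoungTableau μ) r,
      ((List.range (μ.rowLen r)).map (V r)).Pairwise (· ≤ ·) := by
    intro V r
    rw [List.pairwise_map]
    refine List.Pairwise.imp_of_mem ?_ List.pairwise_lt_range
    intro a b _ hb hab
    exact V.row_weak hab (YoungDiagram.mem_iff_lt_rowLen.2 (List.mem_range.1 hb))
  ext r c
  by_cases hc : (r, c) ∈ μ
  · have hp : ((List.range (μ.rowLen r)).map (T r)).Perm ((List.range (μ.rowLen r)).map (U r)) := by
      rw [List.perm_iff_count]
      intro x
      have := DFunLike.congr_fun h (r, x)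
      rwa [dexp_apply, dexp_apply] at this
    have he := hp.eq_of_pairwise' (hs T r) (hs U r)
    rw [List.map_inj_left] at he
    exact he c (List.mem_range.2 (YoungDiagram.mem_iff_lt_rowLen.1 hc))
  · rw [T.zeros hc, U.zeros hc]

theorem lead_indep {ι : Type*} (p : ι → MvPolynomial (ℕ × ℕ) ℂ) (d : ι → (ℕ × ℕ) →₀ ℕ)
    (hd : Function.Injective d) (h : ∀ i, Lead (p i) (d i)) : LinearIndependent ℂ p := by
  classical
  rw [linearIndependent_iff']
  intro s g hg
  by_contra! hne
  obtain ⟨i₀, hi₀, hg₀⟩ := hne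
  obtain ⟨j, hj, hmax⟩ := Finset.exists_max_image (s.filter fun i => g i ≠ 0) (fun i => wt (d i))
    ⟨i₀, by simp [hi₀, hg₀]⟩
  rw [Finset.mem_filter] at hj
  have hc := congrArg (MvPolynomial.coeff (d j)) hg
  rw [MvPolynomial.coeff_sum, Finset.sum_eq_single j] at hc
  · obtain ⟨q, hq, hq'⟩ := h j
    have h0 : MvPolynomial.coeff (d j) q = 0 := by
      by_contra hh
      exact lt_irrefl _ (hq' _ hh)
    rw [MvPolynomial.coeff_smul, hq, MvPolynomial.coeff_add, h0] at hc
    simp at hc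
    exact hj.2 hc
  · intro i hi hij
    by_cases hgi : g i = 0
    · simp [hgi]
    have hle := hmax i (by simp [hi, hgi])
    obtain ⟨q, hq, hq'⟩ := h i
    have h0 : MvPolynomial.coeff (d j) q = 0 := by
      by_contra hh
      have := hq' _ hh
      omega
    rw [MvPolynomial.coeff_smul, hq, MvPolynomial.coeff_add, h0, MvPolynomial.coeff_monomial,
      if_neg (fun h' => hij (hd h'))]
    simp
  · intro h'; exact absurd hj.1 h'

/-- The Young operators of the semistandard Young tableaux of shape `μ` with entries in
`{1,…,m}` (here 0-indexed: entries `< m`) are linearly independent over `ℂ`. -/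
theorem stmt4 (m : ℕ) (μ : YoungDiagram) :
    LinearIndependent ℂ
      (fun T : {T : SemistandardYoungTableau μ // ∀ i j, (i, j) ∈ μ → T.1 i j < m} =>
        youngOp μ (fun i j => T.1 i j)) := by
  refine lead_indep _ (fun T => dexp μ (fun i j => T.1 i j)) ?_ (fun T => lead_young μ T.1)
  intro T U h
  exact Subtype.ext (dexp_inj μ T.1 U.1 h)
end

section
/- Fix a Young diagram λ with n cells and a natural number m. For any filling T of λ with entries in {1,…,m}, the Young operator Y(T) lies in the ℤ-linear span of the Young operators {Y(T') : T' a semistandard Young tableau of shape λ with entries in {1,…,m}}. (Straightening: every Young operator of shape λ is an integer linear combination of semistandard Young operators of the same shape, using the antisymmetry of Slater operators within columns and the Sylvester exchange relations between adjacent columns.) -/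
open scoped BigOperators

def altRestr {R M N ι : Type*} [CommRing R] [AddCommGroup M] [Module R M] [AddCommGroup N]
    [Module R N] (f : M [⋀^ι]→ₗ[R] N) (P : ι → Prop) [DecidablePred P]
    (z : ι → M) : M [⋀^{a : ι // P a}]→ₗ[R] N :=
  { f.toMultilinearMap.domDomRestrict P (fun i => z i) with
    map_eq_zero_of_eq' := by
      intro v i j hv hij
      refine f.map_eq_zero_of_eq _ (i := i) (j := j) ?_ (fun h => hij (Subtype.ext h))
      simp [i.2, j.2, hv] }

def mergeF {ι α : Type*} (P : ι → Prop) [DecidablePred P] (u : ι → α) (f : {a : ι // P a} → α) :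
    ι → α := fun x => if h : P x then f ⟨x, h⟩ else u x

theorem altRestr_apply {R M N ι : Type*} [CommRing R] [AddCommGroup M] [Module R M]
    [AddCommGroup N]
    [Module R N] (f : M [⋀^ι]→ₗ[R] N) (P : ι → Prop) [DecidablePred P]
    (z : ι → M) (v : {a : ι // P a} → M) : altRestr f P z v = f (mergeF P z v) := rfl

theorem mergeF_comp {ι α β : Type*} (g : α → β) (P : ι → Prop) [DecidablePred P] (u : ι → α)
    (f : {a : ι // P a} → α) (x : ι) :
    mergeF P (fun i => g (u i)) (fun i => g (f i)) x = g (mergeF P u f x) := by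
  unfold mergeF; split <;> rfl

theorem mergeF_self {ι α : Type*} (P : ι → Prop) [DecidablePred P] (u : ι → α) :
    mergeF P u (fun i => u i) = u := by
  funext x; unfold mergeF; split <;> rfl

theorem slater_eq {k : ℕ} (i : Fin k → ℕ) : slaterOp i =
    (Matrix.detRowAlternating (fun c r : Fin k => MvPolynomial.X ((r : ℕ), i c))) := by
  rw [slaterOp, ← Matrix.det_transpose]; rfl

theorem splitSum {α M : Type*} [AddCommGroup M] (s : Finset α) (f : α → M)
    (h : ∑ x ∈ s, f x = 0) (a : α) (ha : a ∈ s) :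
    ∃ t : Finset α, a ∉ t ∧ f a = -∑ x ∈ t, f x := by
  classical
  exact ⟨s.erase a, by simp, eq_neg_of_add_eq_zero_left (by rw [Finset.add_sum_erase _ _ ha, h])⟩

theorem garnir {p q r : ℕ} (hqp : q ≤ p) (hr : r < q) (u : Fin p → ℕ) (w : Fin q → ℕ)
    (P : Submodule ℤ (MvPolynomial (ℕ × ℕ) ℂ)) (z : MvPolynomial (ℕ × ℕ) ℂ)
    (H : ∀ σ : Equiv.Perm ({x : Fin p // r ≤ x.1} ⊕ {x : Fin q // x.1 ≤ r}),
      (∃ x y, σ (Sum.inl x) = Sum.inr y) →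
      slaterOp (mergeF _ u fun x =>
        (Sum.elim (fun x => u x.1) (fun x => w x.1) (σ (Sum.inl x)) : ℕ)) *
      slaterOp (mergeF _ w fun x =>
        (Sum.elim (fun x => u x.1) (fun x => w x.1) (σ (Sum.inr x)) : ℕ)) * z ∈ P) :
    slaterOp u * slaterOp w * z ∈ P := by
  classical
  let R := MvPolynomial (ℕ × ℕ) ℂ
  let vec : ℕ → Fin p → R := fun s r => MvPolynomial.X ((r : ℕ), s)
  let pr : (Fin p → R) →ₗ[R] (Fin q → R) := LinearMap.funLeft R R (Fin.castLE hqp)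
  let a : (Fin p → R) [⋀^{x : Fin p // r ≤ x.1}]→ₗ[R] R :=
    altRestr Matrix.detRowAlternating (fun x : Fin p => r ≤ x.1) (fun x => vec (u x))
  let b : (Fin p → R) [⋀^{x : Fin q // x.1 ≤ r}]→ₗ[R] R :=
    (altRestr Matrix.detRowAlternating (fun x : Fin q => x.1 ≤ r)
      (fun x => pr (vec (w x)))).compLinearMap pr
  have ha : ∀ f : {x : Fin p // r ≤ x.1} → ℕ, a (fun x => vec (f x)) =
      slaterOp (mergeF _ u f) := by
    intro f
    rw [slater_eq, altRestr_apply]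
    congr 1
    funext x
    rw [mergeF_comp]
  have hb : ∀ f : {x : Fin q // x.1 ≤ r} → ℕ, b (fun x => vec (f x)) =
      slaterOp (mergeF _ w f) := by
    intro f
    rw [slater_eq]
    change altRestr Matrix.detRowAlternating (fun x : Fin q => x.1 ≤ r)
      (fun x => pr (vec (w x))) (fun x => pr (vec (f x))) = _
    rw [altRestr_apply]
    congr 1
    funext x
    change mergeF _ (fun x => (pr ∘ vec) (w x)) (fun x => (pr ∘ vec) (f x)) x = _
    rw [mergeF_comp]
    rfl
  have h0 : a.domCoprod b = 0 := by
    refine Module.Basis.ext_alternating (Pi.basisFun R (Fin p)) fun v hv => ?_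
    exfalso
    have h1 := Fintype.card_le_of_injective v hv
    have h2 : Fintype.card (Fin (p - r)) ≤ Fintype.card {x : Fin p // r ≤ x.1} :=
      Fintype.card_le_of_injective
        (fun i => ⟨⟨i.1 + r, by omega⟩, by simp⟩) (by
          intro i j h
          simp at h
          exact Fin.ext h)
    have h3 : Fintype.card (Fin (r + 1)) ≤ Fintype.card {x : Fin q // x.1 ≤ r} :=
      Fintype.card_le_of_injective
        (fun i => ⟨⟨i.1, by omega⟩, by simp; omega⟩) (by
          intro i j h
          simp at h
          exact Fin.ext h)
    rw [Fintype.card_sum, Fintype.card_fin] at h1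
    rw [Fintype.card_fin] at h2 h3
    omega
  let U : {x : Fin p // r ≤ x.1} ⊕ {x : Fin q // x.1 ≤ r} → ℕ :=
    Sum.elim (fun x => u x.1) (fun x => w x.1)
  have h1 := congrArg (LinearMap.mul' R R) (DFunLike.congr_fun h0 (fun x => vec (U x)))
  rw [AlternatingMap.domCoprod_apply, sum_apply, map_sum] at h1
  have key : ∀ σ : Equiv.Perm ({x : Fin p // r ≤ x.1} ⊕ {x : Fin q // x.1 ≤ r}),
      LinearMap.mul' R R (AlternatingMap.domCoprod.summand a b (Quotient.mk'' σ)
        (fun x => vec (U x))) = Equiv.Perm.sign σ • (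
      slaterOp (mergeF _ u fun x => U (σ (Sum.inl x))) *
      slaterOp (mergeF _ w fun x => U (σ (Sum.inr x)))) := by
    intro σ
    rw [AlternatingMap.domCoprod.summand_mk'', ← ha, ← hb, smul_apply, Units.smul_def,
      Units.smul_def, map_zsmul]
    rfl
  have e1 : mergeF (fun x : Fin p => r ≤ x.1) u (fun x => U (Sum.inl x)) = u := mergeF_self _ u
  have e2 : mergeF (fun x : Fin q => x.1 ≤ r) w (fun x => U (Sum.inr x)) = w := mergeF_self _ w
  obtain ⟨t, ht, h2⟩ := splitSum _ _ (h1.trans (map_zero (LinearMap.mul' R R)))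
    (Quotient.mk'' 1) (by exact @Finset.mem_univ _ _ _)
  rw [key] at h2
  simp only [Equiv.Perm.coe_one, id, Equiv.Perm.sign_one, one_smul, e1, e2] at h2
  rw [h2, neg_mul, Finset.sum_mul]
  refine P.neg_mem (P.sum_mem fun x hx => ?_)
  induction x using Quotient.inductionOn' with | _ σ
  rw [key, Units.smul_def, smul_mul_assoc]
  refine P.smul_mem _ (H σ ?_)
  by_contra hcon
  push Not at hcon
  apply ht
  have : σ ∈ (Equiv.Perm.sumCongrHom {x : Fin p // r ≤ x.1} {x : Fin q // x.1 ≤ r}).range := by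
    apply Equiv.Perm.mem_sumCongrHom_range_of_perm_mapsTo_inl
    rintro _ ⟨x, rfl⟩
    rcases h : σ (Sum.inl x) with y | y
    · exact ⟨y, rfl⟩
    · exact absurd h (hcon x y)
  convert hx using 1
  refine Quotient.sound' (QuotientGroup.leftRel_apply.2 ?_)
  simpa using this

theorem sumlt {A B : Type*} [Fintype A] [Fintype B] (U : A ⊕ B → ℕ) (t : ℕ)
    (hA : ∀ a, t ≤ U (Sum.inl a)) (hB : ∀ b, U (Sum.inr b) < t) (σ : Equiv.Perm (A ⊕ B))
    (h : ∃ x y, σ (Sum.inl x) = Sum.inr y) :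
    ∑ a, U (σ (Sum.inl a)) < ∑ a, U (Sum.inl a) := by
  obtain ⟨x, y, hxy⟩ := h
  calc ∑ a, U (σ (Sum.inl a)) < ∑ a, (t + (U (σ (Sum.inl a)) - t)) := by
        apply Finset.sum_lt_sum
        · intro i _; omega
        · refine ⟨x, Finset.mem_univ _, ?_⟩
          rw [hxy]; have := hB y; omega
    _ = ∑ _a : A, t + ∑ a, (U (σ (Sum.inl a)) - t) := Finset.sum_add_distrib
    _ ≤ ∑ _a : A, t + ∑ z, (U (σ z) - t) := by
        rw [Fintype.sum_sum_type]; omega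
    _ = ∑ _a : A, t + ∑ z, (U z - t) := by
        rw [Equiv.sum_comp σ (fun z => U z - t)]
    _ = ∑ _a : A, t + ∑ a, (U (Sum.inl a) - t) := by
        rw [Fintype.sum_sum_type]
        have : ∑ b, (U (Sum.inr b) - t) = 0 := by
          apply Finset.sum_eq_zero; intro b _; have := hB b; omega
        omega
    _ = ∑ a, U (Sum.inl a) := by
        rw [← Finset.sum_add_distrib]
        apply Finset.sum_congr rfl
        intro a _; have := hA a; omega

theorem sum_mergeF {ι : Type*} [Fintype ι] (P : ι → Prop) [DecidablePred P] (u : ι → ℕ)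
    (f : {a : ι // P a} → ℕ) :
    ∑ x, mergeF P u f x = ∑ x, f x + ∑ x : {a // ¬ P a}, u x := by
  rw [← Fintype.sum_subtype_add_sum_subtype P]
  congr 1
  · apply Finset.sum_congr rfl; intro x _; simp [mergeF, x.2]
  · apply Finset.sum_congr rfl; intro x _; simp [mergeF, x.2]

def colSum (μ : YoungDiagram) (T : ℕ → ℕ → ℕ) (j : ℕ) : ℕ :=
  ∑ i : Fin (μ.colLen j), T i j

def measT (μ : YoungDiagram) (T : ℕ → ℕ → ℕ) : ℕ :=
  ∑ j ∈ Finset.range (μ.rowLen 0), (μ.rowLen 0 - j) * colSum μ T j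

theorem colLen_pos_lt {μ : YoungDiagram} {i j : ℕ} (h : (i, j) ∈ μ) : j < μ.rowLen 0 :=
  YoungDiagram.mem_iff_lt_rowLen.1 (μ.up_left_mem (Nat.zero_le i) le_rfl h)

theorem sortT (m : ℕ) (μ : YoungDiagram) (T : ℕ → ℕ → ℕ)
    (hT : ∀ i j, (i, j) ∈ μ → T i j < m) :
    youngOp μ T = 0 ∨ ∃ (T' : ℕ → ℕ → ℕ) (e : ℤ), youngOp μ T = e • youngOp μ T' ∧
      measT μ T' = measT μ T ∧ (∀ i j, (i, j) ∈ μ → T' i j < m) ∧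
      (∀ i1 i2 j, i1 < i2 → (i2, j) ∈ μ → T' i1 j < T' i2 j) ∧
      (∀ i j, (i, j) ∉ μ → T' i j = 0) := by
  by_cases hinj : ∀ j, Function.Injective (fun r : Fin (μ.colLen j) => T r j)
  · right
    let s : ∀ j, Equiv.Perm (Fin (μ.colLen j)) := fun j =>
      Tuple.sort (fun r : Fin (μ.colLen j) => T r j)
    have hs : ∀ j, StrictMono (fun r : Fin (μ.colLen j) => T (s j r) j) := fun j =>
      Monotone.strictMono_of_injective
        (Tuple.monotone_sort (fun r : Fin (μ.colLen j) => T r j))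
        ((hinj j).comp (s j).injective)
    let T' : ℕ → ℕ → ℕ := fun i j => if h : i < μ.colLen j then T (s j ⟨i, h⟩) j else 0
    have hT' : ∀ j (i : Fin (μ.colLen j)), T' i j = T (s j i) j := by
      intro j i; simp [T']
    refine ⟨T', ∏ j ∈ Finset.range (μ.rowLen 0), ((Equiv.Perm.sign (s j) : ℤˣ) : ℤ), ?_, ?_, ?_,
      ?_, ?_⟩
    · unfold youngOp
      rw [zsmul_eq_mul, Int.cast_prod, ← Finset.prod_mul_distrib]
      refine Finset.prod_congr rfl fun j _ => ?_
      have h1 : slaterOp (fun r : Fin (μ.colLen j) => T' r j) =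
          (Equiv.Perm.sign (s j) : ℤ) * slaterOp (fun r : Fin (μ.colLen j) => T r j) := by
        simp only [hT']
        unfold slaterOp
        rw [← Matrix.det_permute' (s j)]
        rfl
      rw [h1, ← mul_assoc, ← Int.cast_mul, ← Units.val_mul, Int.units_mul_self]
      simp
    · unfold measT
      refine Finset.sum_congr rfl fun j _ => ?_
      congr 1
      unfold colSum
      simp only [hT']
      exact Equiv.sum_comp (s j) (fun r => T r j)
    · intro i j h
      have h' := YoungDiagram.mem_iff_lt_colLen.1 h
      rw [hT' j ⟨i, h'⟩]
      exact hT _ _ (YoungDiagram.mem_iff_lt_colLen.2 (s j ⟨i, h'⟩).2)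
    · intro i1 i2 j hi h
      have h' := YoungDiagram.mem_iff_lt_colLen.1 h
      rw [hT' j ⟨i2, h'⟩, hT' j ⟨i1, hi.trans h'⟩]
      exact hs j (show (⟨i1, hi.trans h'⟩ : Fin (μ.colLen j)) < ⟨i2, h'⟩ from hi)
    · intro i j h
      have h' := mt YoungDiagram.mem_iff_lt_colLen.2 h
      simp [T', h']
  · left
    push Not at hinj
    obtain ⟨j, hj⟩ := hinj
    rw [Function.not_injective_iff] at hj
    obtain ⟨x, y, hxy, hne⟩ := hj
    have hjL : j < μ.rowLen 0 :=
      colLen_pos_lt (YoungDiagram.mem_iff_lt_colLen.2 x.2)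
    refine Finset.prod_eq_zero (Finset.mem_range.2 hjL) ?_
    refine Matrix.det_zero_of_column_eq hne fun k => ?_
    exact congrArg (fun s => (MvPolynomial.X ((k : ℕ), s) : MvPolynomial (ℕ × ℕ) ℂ)) hxy

theorem split2 {M : Type*} [CommMonoid M] {L c : ℕ} (h : c + 1 < L) (f : ℕ → M) :
    ∏ j ∈ Finset.range L, f j =
      f c * f (c + 1) * ∏ j ∈ ((Finset.range L).erase c).erase (c + 1), f j := by
  rw [← Finset.mul_prod_erase (Finset.range L) f (a := c) (by simp; omega),
    ← Finset.mul_prod_erase ((Finset.range L).erase c) f (a := c + 1) (by simp; omega), mul_assoc]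

theorem split2' {L c : ℕ} (h : c + 1 < L) (f : ℕ → ℕ) :
    ∑ j ∈ Finset.range L, f j =
      f c + f (c + 1) + ∑ j ∈ ((Finset.range L).erase c).erase (c + 1), f j := by
  rw [← Finset.add_sum_erase (Finset.range L) f (a := c) (by simp; omega),
    ← Finset.add_sum_erase ((Finset.range L).erase c) f (a := c + 1) (by simp; omega), add_assoc]

theorem stepT (m : ℕ) (μ : YoungDiagram) (T : ℕ → ℕ → ℕ)
    (hT : ∀ i j, (i, j) ∈ μ → T i j < m)
    (hcol : ∀ i1 i2 j, i1 < i2 → (i2, j) ∈ μ → T i1 j < T i2 j)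
    (r c : ℕ) (hrc : (r, c + 1) ∈ μ) (hlt : T r (c + 1) < T r c)
    (P : Submodule ℤ (MvPolynomial (ℕ × ℕ) ℂ))
    (IH : ∀ T' : ℕ → ℕ → ℕ, measT μ T' < measT μ T → (∀ i j, (i, j) ∈ μ → T' i j < m) →
      youngOp μ T' ∈ P) : youngOp μ T ∈ P := by
  have hL : c + 1 < μ.rowLen 0 := colLen_pos_lt hrc
  have hrq := YoungDiagram.mem_iff_lt_colLen.1 hrc
  have hqp : μ.colLen (c + 1) ≤ μ.colLen c := μ.colLen_anti _ _ (Nat.le_succ c)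
  rw [youngOp, split2 hL]
  refine garnir hqp hrq _ _ P _ fun σ hσ => ?_
  set u : Fin (μ.colLen c) → ℕ := fun i => T i c with hu
  set w : Fin (μ.colLen (c + 1)) → ℕ := fun i => T i (c + 1) with hw
  set U : {x : Fin (μ.colLen c) // r ≤ x.1} ⊕ {x : Fin (μ.colLen (c + 1)) // x.1 ≤ r} → ℕ :=
    Sum.elim (fun x => u x.1) (fun x => w x.1) with hU
  set u' := mergeF (fun x : Fin (μ.colLen c) => r ≤ x.1) u (fun x => U (σ (Sum.inl x))) with hu'
  set w' := mergeF (fun x : Fin (μ.colLen (c + 1)) => x.1 ≤ r) w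
    (fun x => U (σ (Sum.inr x))) with hw'
  have hub : ∀ x, u x < m := fun x => hT _ _ (YoungDiagram.mem_iff_lt_colLen.2 x.2)
  have hwb : ∀ x, w x < m := fun x => hT _ _ (YoungDiagram.mem_iff_lt_colLen.2 x.2)
  have hUb : ∀ x, U x < m := by
    rintro (x | x)
    · exact hub _
    · exact hwb _
  have hu'b : ∀ x, u' x < m := by
    intro x; rw [hu']; unfold mergeF; split
    · exact hUb _
    · exact hub _
  have hw'b : ∀ x, w' x < m := by
    intro x; rw [hw']; unfold mergeF; split
    · exact hUb _
    · exact hwb _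
  let T' : ℕ → ℕ → ℕ := fun i j =>
    if j = c then (if h : i < μ.colLen c then u' ⟨i, h⟩ else 0)
    else if j = c + 1 then (if h : i < μ.colLen (c + 1) then w' ⟨i, h⟩ else 0)
    else T i j
  have t1 : ∀ i : Fin (μ.colLen c), T' i c = u' i := by intro i; simp [T']
  have t2 : ∀ i : Fin (μ.colLen (c + 1)), T' i (c + 1) = w' i := by intro i; simp [T']
  have t3 : ∀ i j, j ≠ c → j ≠ c + 1 → T' i j = T i j := by
    intro i j h1 h2; simp [T', h1, h2]
  have hY : youngOp μ T' = slaterOp u' * slaterOp w' *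
      ∏ j ∈ ((Finset.range (μ.rowLen 0)).erase c).erase (c + 1),
        slaterOp (fun r : Fin (μ.colLen j) => T r j) := by
    rw [youngOp, split2 hL]
    simp only [t1, t2]
    congr 1
    refine Finset.prod_congr rfl fun j hj => ?_
    simp only [Finset.mem_erase] at hj
    simp only [t3 _ j hj.2.1 hj.1]
  rw [← hY]
  apply IH
  · have s1 : ∑ x, U (σ (Sum.inl x)) < ∑ x, U (Sum.inl x) := by
      refine sumlt U (T r c) ?_ ?_ σ hσ
      · rintro ⟨x, hx⟩
        rcases hx.eq_or_lt with h | h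
        · simp only [hU, hu, Sum.elim_inl, ← h]; exact le_rfl
        · exact (hcol _ _ _ h (YoungDiagram.mem_iff_lt_colLen.2 x.2)).le
      · rintro ⟨x, hx⟩
        rcases hx.eq_or_lt with h | h
        · simp only [hU, hw, Sum.elim_inr, h]; exact hlt
        · exact (hcol _ _ _ h hrc).trans hlt
    have s2 : ∑ x, U (σ x) = ∑ x, U x := Equiv.sum_comp σ U
    rw [Fintype.sum_sum_type, Fintype.sum_sum_type] at s2
    have c1 : colSum μ T' c = ∑ x, U (σ (Sum.inl x)) +
        ∑ x : {a : Fin (μ.colLen c) // ¬ r ≤ a.1}, u x := by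
      unfold colSum; simp only [t1]; exact sum_mergeF _ _ _
    have c2 : colSum μ T c = ∑ x, U (Sum.inl x) +
        ∑ x : {a : Fin (μ.colLen c) // ¬ r ≤ a.1}, u x := by
      rw [← sum_mergeF]
      exact Finset.sum_congr rfl fun x _ => (congrFun (mergeF_self _ u) x).symm
    have c3 : colSum μ T' (c + 1) = ∑ x, U (σ (Sum.inr x)) +
        ∑ x : {a : Fin (μ.colLen (c + 1)) // ¬ a.1 ≤ r}, w x := by
      unfold colSum; simp only [t2]; exact sum_mergeF _ _ _
    have c4 : colSum μ T (c + 1) = ∑ x, U (Sum.inr x) +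
        ∑ x : {a : Fin (μ.colLen (c + 1)) // ¬ a.1 ≤ r}, w x := by
      rw [← sum_mergeF]
      exact Finset.sum_congr rfl fun x _ => (congrFun (mergeF_self _ w) x).symm
    have c5 : ∑ j ∈ ((Finset.range (μ.rowLen 0)).erase c).erase (c + 1),
        (μ.rowLen 0 - j) * colSum μ T' j =
        ∑ j ∈ ((Finset.range (μ.rowLen 0)).erase c).erase (c + 1),
        (μ.rowLen 0 - j) * colSum μ T j := by
      refine Finset.sum_congr rfl fun j hj => ?_
      simp only [Finset.mem_erase] at hj
      unfold colSum
      simp only [t3 _ j hj.2.1 hj.1]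
    unfold measT
    rw [split2' hL, split2' hL, c5]
    have e1 : colSum μ T' c + colSum μ T' (c + 1) = colSum μ T c + colSum μ T (c + 1) := by omega
    have e2 : colSum μ T' c < colSum μ T c := by omega
    obtain ⟨k, hk⟩ : ∃ k, μ.rowLen 0 - (c + 1) = k := ⟨_, rfl⟩
    have hk' : μ.rowLen 0 - c = k + 1 := by omega
    rw [hk, hk']
    nlinarith
  · intro i j h
    have h' := YoungDiagram.mem_iff_lt_colLen.1 h
    by_cases h1 : j = c
    · subst h1; exact (t1 ⟨i, h'⟩).trans_lt (hu'b _)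
    by_cases h2 : j = c + 1
    · subst h2; exact (t2 ⟨i, h'⟩).trans_lt (hw'b _)
    rw [t3 _ _ h1 h2]; exact hT _ _ h

/-- Straightening: the Young operator of any filling of `μ` with entries in `{1,…,m}`
(0-indexed: entries `< m` on the cells) lies in the `ℤ`-span of the Young operators of the
semistandard Young tableaux of shape `μ` with entries in `{1,…,m}`. -/
theorem stmt5 (m : ℕ) (μ : YoungDiagram) (T : ℕ → ℕ → ℕ)
    (hT : ∀ i j, (i, j) ∈ μ → T i j < m) :
    youngOp μ T ∈
      Submodule.span ℤ
        (Set.range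
          (fun T' : {T' : SemistandardYoungTableau μ // ∀ i j, (i, j) ∈ μ → T'.1 i j < m} =>
            youngOp μ (fun i j => T'.1 i j))) := by
  induction hn : measT μ T using Nat.strong_induction_on generalizing T with
  | _ n ih =>
    rcases sortT m μ T hT with h0 | ⟨S, e, hY, hm, hb, hcol, hz⟩
    · rw [h0]; exact Submodule.zero_mem _
    rw [hY]
    refine Submodule.smul_mem _ _ ?_
    by_cases hrow : ∀ i j, (i, j + 1) ∈ μ → S i j ≤ S i (j + 1)
    · have hr : ∀ i j1 k, (i, j1 + k) ∈ μ → S i j1 ≤ S i (j1 + k) := by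
        intro i j1 k
        induction k with
        | zero => intro _; exact le_rfl
        | succ k ihk =>
          intro h
          exact (ihk (μ.up_left_mem le_rfl (by omega) h)).trans (hrow i (j1 + k) h)
      let Q : SemistandardYoungTableau μ :=
        { entry := S
          row_weak' := by
            intro i j1 j2 hj h
            obtain ⟨k, rfl⟩ := Nat.exists_eq_add_of_le hj.le
            exact hr i j1 k h
          col_strict' := by
            intro i1 i2 j hi h
            exact hcol i1 i2 j hi h
          zeros' := by
            intro i j h
            exact hz i j h }
      exact Submodule.subset_span ⟨⟨Q, hb⟩, rfl⟩
    · push Not at hrow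
      obtain ⟨r, c, hrc, hlt⟩ := hrow
      refine stepT m μ S hb hcol r c hrc hlt _ fun T' hlt' hb' => ?_
      exact ih (measT μ T') (by omega) T' hb' rfl
end

section
/- Let n ≥ 1 and x a real number with 0 ≤ x < 1. Then (1/n!) · Σ_{σ∈S_n} (1−x)^n · ∏_c (1 − x^{|c|})^{−1} = ∏_{k=1}^{n} (1−x)/(1−x^k), where for each permutation σ the product runs over the orbits c of σ acting on Fin n (fixed points counted as orbits of size 1). (This is the probability p^{(n)}_x that n harmonic oscillators in thermal states of Boltzmann factor x occupy the fully symmetric partition λ = (n); it equals (1/n!)Σ_σ k_x(σ) since the trivial character of S_n is identically 1.) -/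
open scoped BigOperators

/-- The finite set of orbits (cycles, with fixed points as singleton orbits) of a
permutation `σ` of `Fin n`. -/
def orbitsFinset {n : ℕ} (σ : Equiv.Perm (Fin n)) : Finset (Finset (Fin n)) :=
  Finset.univ.image fun y => Finset.univ.filter fun z => σ.SameCycle y z

open Finset

/-- orbits over a general finite type -/
def orbG {α : Type} [Fintype α] [DecidableEq α] (σ : Equiv.Perm α) : Finset (Finset α) :=
  Finset.univ.image fun y => Finset.univ.filter fun z => σ.SameCycle y z

lemma emb_zpow {α β : Type} (σ : Equiv.Perm α) (τ : Equiv.Perm β) (e : β ↪ α)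
    (h : ∀ b, e (τ b) = σ (e b)) (k : ℤ) (b : β) : (σ ^ k) (e b) = e ((τ ^ k) b) := by
  have hn : ∀ (m : ℕ) (b : β), (σ ^ m) (e b) = e ((τ ^ m) b) := by
    intro m
    induction m with
    | zero => intro b; simp
    | succ m ih => intro b; rw [pow_succ, pow_succ, Equiv.Perm.mul_apply, Equiv.Perm.mul_apply,
        ← h, ih]
  cases k with
  | ofNat m => simpa using hn m b
  | negSucc m =>
    rw [zpow_negSucc, zpow_negSucc, Equiv.Perm.inv_eq_iff_eq, hn]
    simp

lemma emb_sameCycle {α β : Type} (σ : Equiv.Perm α) (τ : Equiv.Perm β) (e : β ↪ α)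
    (h : ∀ b, e (τ b) = σ (e b)) (b : β) (z : α) :
    σ.SameCycle (e b) z ↔ ∃ b', τ.SameCycle b b' ∧ e b' = z := by
  constructor
  · rintro ⟨k, hk⟩
    exact ⟨(τ ^ k) b, ⟨k, rfl⟩, by rw [← hk, emb_zpow σ τ e h]⟩
  · rintro ⟨b', ⟨k, hk⟩, rfl⟩
    exact ⟨k, by rw [emb_zpow σ τ e h, hk]⟩

lemma orbG_emb {α β : Type} [Fintype α] [DecidableEq α] [Fintype β] [DecidableEq β]
    (σ : Equiv.Perm α) (τ : Equiv.Perm β) (e : β ↪ α)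
    (h : ∀ b, e (τ b) = σ (e b)) :
    (orbG τ).image (fun c => c.map e) = (orbG σ).filter (fun c => c ⊆ univ.map e) := by
  have key : ∀ b, (univ.filter fun z => τ.SameCycle b z).map e
      = univ.filter fun z => σ.SameCycle (e b) z := by
    intro b
    ext z
    simp [emb_sameCycle σ τ e h]
  ext c
  simp only [orbG, mem_image, mem_filter, mem_univ, true_and]
  constructor
  · rintro ⟨_, ⟨b, rfl⟩, rfl⟩
    exact ⟨⟨e b, (key b).symm⟩, map_subset_map.2 (subset_univ _)⟩
  · rintro ⟨⟨y, rfl⟩, hc⟩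
    have hy : y ∈ univ.map e := hc (by simp [Equiv.Perm.SameCycle.refl])
    obtain ⟨b, -, rfl⟩ := mem_map.1 hy
    exact ⟨_, ⟨b, rfl⟩, key b⟩

lemma prod_emb {α β : Type} [Fintype α] [DecidableEq α] [Fintype β] [DecidableEq β]
    (σ : Equiv.Perm α) (τ : Equiv.Perm β) (e : β ↪ α)
    (h : ∀ b, e (τ b) = σ (e b)) (f : ℕ → ℝ) :
    ∏ c ∈ orbG τ, f c.card = ∏ c ∈ (orbG σ).filter (fun c => c ⊆ univ.map e), f c.card := by
  rw [← orbG_emb σ τ e h, prod_image]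
  · simp
  · intro a _ b _ hab
    exact map_injective e hab

/-- weight -/
noncomputable def Wt (x : ℝ) {α : Type} [Fintype α] [DecidableEq α] (σ : Equiv.Perm α) : ℝ :=
  ∏ c ∈ orbG σ, (1 - x ^ c.card)⁻¹

lemma orbG_disj {α : Type} [Fintype α] [DecidableEq α] (σ : Equiv.Perm α) {c d : Finset α}
    (hc : c ∈ orbG σ) (hd : d ∈ orbG σ) {z : α} (hzc : z ∈ c) (hzd : z ∈ d) : c = d := by
  simp only [orbG, mem_image, mem_univ, true_and] at hc hd
  obtain ⟨y, rfl⟩ := hc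
  obtain ⟨y', rfl⟩ := hd
  simp only [mem_filter, mem_univ, true_and] at hzc hzd
  ext w
  simp only [mem_filter, mem_univ, true_and]
  exact ⟨fun hw => hzd.trans (hzc.symm.trans hw), fun hw => hzc.trans (hzd.symm.trans hw)⟩

lemma orbG_nonempty {α : Type} [Fintype α] [DecidableEq α] (σ : Equiv.Perm α) {c : Finset α}
    (hc : c ∈ orbG σ) : c.Nonempty := by
  simp only [orbG, mem_image, mem_univ, true_and] at hc
  obtain ⟨y, rfl⟩ := hc
  exact ⟨y, by simp [Equiv.Perm.SameCycle.refl]⟩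

lemma orbG_inv {α : Type} [Fintype α] [DecidableEq α] (σ : Equiv.Perm α) {c : Finset α}
    (hc : c ∈ orbG σ) (a : α) : σ a ∈ c ↔ a ∈ c := by
  simp only [orbG, mem_image, mem_univ, true_and] at hc
  obtain ⟨y, rfl⟩ := hc
  simp

lemma orb_subset_inv {α : Type} [Fintype α] [DecidableEq α] (σ : Equiv.Perm α) {A : Finset α}
    (hA : ∀ a, σ a ∈ A ↔ a ∈ A) {y : α} (hy : y ∈ A) :
    (univ.filter fun z => σ.SameCycle y z) ⊆ A := by
  intro z hz
  simp only [mem_filter, mem_univ, true_and] at hz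
  have := emb_sameCycle σ (σ.subtypePerm (p := fun a => a ∈ A) hA) (Function.Embedding.subtype _)
    (fun b => rfl) ⟨y, hy⟩ z
  obtain ⟨b, -, rfl⟩ := this.1 hz
  exact b.2

lemma Wt_expand (x : ℝ) (h0 : 0 ≤ x) (h1 : x < 1) {α : Type} [Fintype α] [DecidableEq α]
    (σ : Equiv.Perm α) :
    Wt x σ = ∑ A ∈ univ.filter (fun A : Finset α => ∀ a, σ a ∈ A ↔ a ∈ A),
      x ^ A.card * ∏ c ∈ (orbG σ).filter (fun c => c ⊆ A), (1 - x ^ c.card)⁻¹ := by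
  have e1 : Wt x σ = ∏ c ∈ orbG σ, (1 + x ^ c.card * (1 - x ^ c.card)⁻¹) := by
    refine prod_congr rfl fun c hc => ?_
    have : x ^ c.card < 1 := pow_lt_one₀ h0 h1 (orbG_nonempty σ hc).card_pos.ne'
    have : 1 - x ^ c.card ≠ 0 := by linarith
    field_simp
    ring
  rw [e1, prod_one_add]
  refine sum_bij' (fun S _ => S.biUnion id) (fun A _ => (orbG σ).filter (fun c => c ⊆ A))
    ?_ ?_ ?_ ?_ ?_
  · intro S hS
    rw [mem_powerset] at hS
    simp only [mem_filter, mem_univ, true_and, mem_biUnion, id]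
    intro a
    exact exists_congr fun c => and_congr_right fun hc => orbG_inv σ (hS hc) a
  · intro A _
    simp
  · intro S hS
    rw [mem_powerset] at hS
    ext c
    simp only [mem_filter]
    constructor
    · rintro ⟨hc, hcS⟩
      obtain ⟨z, hz⟩ := orbG_nonempty σ hc
      obtain ⟨d, hd, hzd⟩ := mem_biUnion.1 (hcS hz)
      rwa [orbG_disj σ hc (hS hd) hz hzd]
    · intro hc
      exact ⟨hS hc, subset_biUnion_of_mem id hc⟩
  · intro A hA
    simp only [mem_filter, mem_univ, true_and] at hA
    ext y
    simp only [mem_biUnion, mem_filter, id]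
    constructor
    · rintro ⟨c, ⟨_, hc⟩, hy⟩
      exact hc hy
    · intro hy
      exact ⟨_, ⟨mem_image_of_mem _ (mem_univ y), orb_subset_inv σ hA hy⟩,
        by simp [Equiv.Perm.SameCycle.refl]⟩
  · intro S hS
    rw [mem_powerset] at hS
    have : (orbG σ).filter (fun c => c ⊆ S.biUnion id) = S := by
      ext c
      simp only [mem_filter]
      constructor
      · rintro ⟨hc, hcS⟩
        obtain ⟨z, hz⟩ := orbG_nonempty σ hc
        obtain ⟨d, hd, hzd⟩ := mem_biUnion.1 (hcS hz)
        rwa [orbG_disj σ hc (hS hd) hz hzd]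
      · intro hc
        exact ⟨hS hc, subset_biUnion_of_mem id hc⟩
    rw [this, prod_mul_distrib, prod_pow_eq_pow_sum, card_biUnion]
    · rfl
    · intro c hc d hd hcd
      refine Finset.disjoint_left.2 ?_
      intro z hz hz'
      exact hcd (orbG_disj σ (hS hc) (hS hd) hz hz')

lemma Wt_restrict (x : ℝ) {α : Type} [Fintype α] [DecidableEq α]
    (σ : Equiv.Perm α) (A : Finset α) (hA : ∀ a, σ a ∈ A ↔ a ∈ A) :
    ∏ c ∈ (orbG σ).filter (fun c => c ⊆ A), (1 - x ^ c.card)⁻¹ =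
      Wt x (σ.subtypePerm (p := fun a => a ∈ A) hA) := by
  have := prod_emb σ (σ.subtypePerm (p := fun a => a ∈ A) hA) (Function.Embedding.subtype _)
    (fun b => rfl) (fun k => (1 - x ^ k)⁻¹)
  rw [Wt, this]
  congr 2
  ext c
  congr! 1
  ext; simp

/-- total -/
noncomputable def Ht (x : ℝ) (α : Type) [Fintype α] [DecidableEq α] : ℝ :=
  ∑ σ : Equiv.Perm α, Wt x σ

lemma Ht_equiv (x : ℝ) {α β : Type} [Fintype α] [DecidableEq α] [Fintype β] [DecidableEq β]
    (e : α ≃ β) : Ht x α = Ht x β := by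
  refine Fintype.sum_equiv e.permCongr _ _ fun τ => ?_
  have := prod_emb (e.permCongr τ) τ e.toEmbedding (fun b => by simp)
    (fun k => (1 - x ^ k)⁻¹)
  rw [Wt, this, Wt]
  congr 1
  simp

lemma sum_restrict {α : Type} [Fintype α] [DecidableEq α] (A : Finset α)
    (g : Equiv.Perm {a // a ∈ A} → ℝ) (G : Equiv.Perm α → ℝ)
    (hG : ∀ σ (hA : ∀ a, σ a ∈ A ↔ a ∈ A), G σ = g (σ.subtypePerm (p := fun a => a ∈ A) hA)) :
    ∑ σ ∈ univ.filter (fun σ : Equiv.Perm α => ∀ a, σ a ∈ A ↔ a ∈ A), G σ =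
      ((Fintype.card α - A.card).factorial : ℝ) * ∑ τ, g τ := by
  have hc : ((Fintype.card α - A.card).factorial : ℝ) =
      ∑ _ρ : Equiv.Perm {a // ¬ a ∈ A}, (1 : ℝ) := by
    rw [sum_const, card_univ, Fintype.card_perm, Fintype.card_subtype_compl]
    simp
  rw [hc, sum_mul_sum, sum_comm, ← sum_product']
  symm
  refine sum_bij' (fun p _ => Equiv.Perm.subtypeCongr p.1 p.2)
    (fun σ hσ => (σ.subtypePerm (p := fun a => a ∈ A) (mem_filter.1 hσ).2,
      σ.subtypePerm (p := fun a => ¬ a ∈ A) (fun a => not_congr ((mem_filter.1 hσ).2 a))))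
    ?_ ?_ ?_ ?_ ?_
  · rintro ⟨τ, ρ⟩ _
    simp only [mem_filter, mem_univ, true_and]
    intro a
    by_cases ha : a ∈ A
    · rw [Equiv.Perm.subtypeCongr.left_apply _ _ ha]; simp [ha]
    · rw [Equiv.Perm.subtypeCongr.right_apply _ _ ha]
      simp only [ha, iff_false]
      exact (ρ ⟨a, ha⟩).2
  · intros; simp
  · rintro ⟨τ, ρ⟩ _
    ext a <;> simp
  · intro σ hσ
    ext a
    by_cases ha : a ∈ A
    · rw [Equiv.Perm.subtypeCongr.left_apply _ _ ha]; simp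
    · rw [Equiv.Perm.subtypeCongr.right_apply _ _ ha]; simp
  · rintro ⟨τ, ρ⟩ _
    have hA : ∀ a, (Equiv.Perm.subtypeCongr τ ρ) a ∈ A ↔ a ∈ A := by
      intro a
      by_cases ha : a ∈ A
      · rw [Equiv.Perm.subtypeCongr.left_apply _ _ ha]; simp [ha]
      · rw [Equiv.Perm.subtypeCongr.right_apply _ _ ha]
        simp only [ha, iff_false]
        exact (ρ ⟨a, ha⟩).2
    rw [hG _ hA, one_mul]
    congr 1
    ext a
    simp

lemma Ht_expand (x : ℝ) (h0 : 0 ≤ x) (h1 : x < 1) (α : Type) [Fintype α] [DecidableEq α] :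
    Ht x α = ∑ A : Finset α,
      x ^ A.card * (((Fintype.card α - A.card).factorial : ℝ) * Ht x {a // a ∈ A}) := by
  rw [Ht, sum_congr rfl fun σ _ => Wt_expand x h0 h1 σ]
  simp_rw [sum_filter]
  rw [sum_comm]
  refine sum_congr rfl fun A _ => ?_
  refine (sum_filter (fun σ : Equiv.Perm α => ∀ a, σ a ∈ A ↔ a ∈ A)
    (fun σ => x ^ A.card *
      ∏ c ∈ (orbG σ).filter (fun c => c ⊆ A), (1 - x ^ c.card)⁻¹)).symm.trans ?_
  rw [← mul_sum, sum_restrict A (Wt x) _ (fun σ hA => Wt_restrict x σ A hA)]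
  rfl

/-- normalized -/
noncomputable def hh (x : ℝ) (n : ℕ) : ℝ := Ht x (Fin n) / n.factorial

lemma hh_rec (x : ℝ) (h0 : 0 ≤ x) (h1 : x < 1) (n : ℕ) :
    hh x n = ∑ j ∈ range (n + 1), x ^ j * hh x j := by
  have e1 : Ht x (Fin n) = ∑ A : Finset (Fin n),
      x ^ A.card * (((n - A.card).factorial : ℝ) * Ht x (Fin A.card)) := by
    rw [Ht_expand x h0 h1]
    refine sum_congr rfl fun A _ => ?_
    rw [Fintype.card_fin, Ht_equiv x A.equivFin]
  rw [hh, e1, ← powerset_univ,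
    sum_powerset_apply_card (fun k => x ^ k * (((n - k).factorial : ℝ) * Ht x (Fin k))),
    card_univ, Fintype.card_fin, sum_div]
  refine sum_congr rfl fun j hj => ?_
  have hj' : j ≤ n := Nat.lt_succ_iff.1 (mem_range.1 hj)
  have := Nat.choose_mul_factorial_mul_factorial hj'
  have h2 : (n.choose j : ℝ) * j.factorial * (n - j).factorial = n.factorial := by
    exact_mod_cast this
  have a1 : (j.factorial : ℝ) ≠ 0 := by positivity
  have a2 : (n.factorial : ℝ) ≠ 0 := by positivity
  rw [hh, nsmul_eq_mul]
  field_simp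
  rw [← h2]
  ring

lemma hh_closed (x : ℝ) (h0 : 0 ≤ x) (h1 : x < 1) (n : ℕ) :
    (1 - x) ^ n * hh x n = ∏ k ∈ Finset.Icc 1 n, (1 - x) / (1 - x ^ k) := by
  induction n with
  | zero => simp [hh, Ht, Wt, orbG]
  | succ n ih =>
    rw [prod_Icc_succ_top (by omega), ← ih]
    have h := hh_rec x h0 h1 (n + 1)
    rw [sum_range_succ, ← hh_rec x h0 h1 n] at h
    have : x ^ (n + 1) < 1 := pow_lt_one₀ h0 h1 (by omega)
    have : 1 - x ^ (n + 1) ≠ 0 := by linarith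
    field_simp
    linear_combination (1 - x) ^ (n + 1) * h

theorem stmt13 {n : ℕ} (hn : 1 ≤ n) (x : ℝ) (h0 : 0 ≤ x) (h1 : x < 1) :
    (1 / (n.factorial : ℝ)) *
        ∑ σ : Equiv.Perm (Fin n), (1 - x) ^ n * ∏ c ∈ orbitsFinset σ, (1 - x ^ c.card)⁻¹ =
      ∏ k ∈ Finset.Icc 1 n, (1 - x) / (1 - x ^ k) := by
  rw [← hh_closed x h0 h1 n, ← mul_sum]
  have : ∑ σ : Equiv.Perm (Fin n), ∏ c ∈ orbitsFinset σ, (1 - x ^ c.card)⁻¹ = Ht x (Fin n) := rfl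
  rw [this, hh]
  ring
end
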